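/- Let (R, 𝒜, χ) be a measure space and g : R × ℝ → ℝ a function such that r ↦ g(r,α) is measurable for every α ∈ ℝ and α ↦ g(r,α) is continuous for every r ∈ R. Let f : R → ℝ be measurable and assume that r ↦ sup_{β ∈ [−1,1]} |g(r, β f(r))| is χ-integrable. Then ∫_R sup_{β ∈ [−1,1]} g(r, β f(r)) χ(dr) = sup { ∫_R g(r, γ(r) f(r)) χ(dr) : γ : R → [−1,1] a measurable simple function }. -/

import Mathlib

open MeasureTheory

theorem aux_meas {R : Type*} [MeasurableSpace R] (g : R → ℝ → ℝ)
    (hmeas : ∀ α : ℝ, Measurable fun r => g r α)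
    (hcont : ∀ r : R, Continuous fun α => g r α)
    (u : R → ℝ) (hu : Measurable u) : Measurable fun r => g r (u r) := by
  have h := measurable_uncurry_of_continuous_of_measurable (u := fun α r => g r α) hcont hmeas
  exact h.comp (hu.prodMk measurable_id)

open Classical in
/-- Running maximisers along a sequence. -/
theorem aux_seq {R : Type*} [MeasurableSpace R] (g : R → ℝ → ℝ)
    (hmeas : ∀ α : ℝ, Measurable fun r => g r α)
    (hcont : ∀ r : R, Continuous fun α => g r α)
    (f : R → ℝ) (hf : Measurable f) (d : ℕ → ℝ) (hd : ∀ n, d n ∈ Set.Icc (-1 : ℝ) 1) (n : ℕ) :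
    ∃ γ : SimpleFunc R ℝ, (∀ r, γ r ∈ Set.Icc (-1 : ℝ) 1) ∧
      ∀ r, ∀ k ≤ n, g r (d k * f r) ≤ g r (γ r * f r) := by
  induction n with
  | zero =>
    refine ⟨SimpleFunc.const R (d 0), fun r => hd 0, fun r k hk => ?_⟩
    obtain rfl : k = 0 := by omega
    simp
  | succ n ih =>
    obtain ⟨γ, h1, h2⟩ := ih
    have hs : MeasurableSet {r | g r (γ r * f r) < g r (d (n + 1) * f r)} :=
      measurableSet_lt (aux_meas g hmeas hcont _ (γ.measurable.mul hf))
        (aux_meas g hmeas hcont _ (measurable_const.mul hf))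
    refine ⟨SimpleFunc.piecewise _ hs (SimpleFunc.const R (d (n + 1))) γ, fun r => ?_,
      fun r k hk => ?_⟩
    · by_cases h : g r (γ r * f r) < g r (d (n + 1) * f r)
      · simpa [SimpleFunc.piecewise_apply, h] using hd (n + 1)
      · simpa [SimpleFunc.piecewise_apply, h] using h1 r
    · have hk' : k ≤ n ∨ k = n + 1 := by omega
      by_cases h : g r (γ r * f r) < g r (d (n + 1) * f r)
      · simp only [SimpleFunc.piecewise_apply, Set.mem_setOf_eq, h, if_true, SimpleFunc.const_apply]
        rcases hk' with hk' | rfl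
        · exact (h2 r k hk').trans h.le
        · exact le_rfl
      · simp only [SimpleFunc.piecewise_apply, Set.mem_setOf_eq, h, if_false]
        rcases hk' with hk' | rfl
        · exact h2 r k hk'
        · exact not_lt.1 h

/-- Lemma 3.6: for a Carathéodory function `g` and measurable `f` with integrable
majorant `r ↦ sup_{|β|≤1} |g(r, βf(r))|`, the integral of the pointwise supremum
`sup_{|β|≤1} g(r, βf(r))` equals the supremum of the integrals `∫ g(r, γ(r)f(r)) dχ`
over all measurable simple functions `γ` with values in `[−1,1]`. -/
theorem integral_sup_eq_sup_integral_simple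
    {R : Type*} [MeasurableSpace R] (χ : Measure R)
    (g : R → ℝ → ℝ)
    (hmeas : ∀ α : ℝ, Measurable fun r => g r α)
    (hcont : ∀ r : R, Continuous fun α => g r α)
    (f : R → ℝ) (hf : Measurable f)
    (hint : Integrable (fun r => ⨆ β : Set.Icc (-1 : ℝ) 1, |g r (β * f r)|) χ) :
    ∫ r, (⨆ β : Set.Icc (-1 : ℝ) 1, g r (β * f r)) ∂χ
      = sSup {y : ℝ | ∃ γ : SimpleFunc R ℝ,
          (∀ r, γ r ∈ Set.Icc (-1 : ℝ) 1) ∧ y = ∫ r, g r (γ r * f r) ∂χ} := by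
  have hc : ∀ r, Continuous fun β : Set.Icc (-1 : ℝ) 1 => g r (β * f r) := fun r =>
    (hcont r).comp (continuous_subtype_val.mul continuous_const)
  have hb : ∀ r, BddAbove (Set.range fun β : Set.Icc (-1 : ℝ) 1 => g r (β * f r)) := fun r =>
    (isCompact_range (hc r)).bddAbove
  have hb' : ∀ r, BddAbove (Set.range fun β : Set.Icc (-1 : ℝ) 1 => |g r (β * f r)|) := fun r =>
    (isCompact_range (hc r).abs).bddAbove
  haveI : Nonempty (Set.Icc (-1 : ℝ) 1) := ⟨⟨0, by norm_num⟩⟩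
  have hle : ∀ r, ∀ b ∈ Set.Icc (-1 : ℝ) 1,
      g r (b * f r) ≤ ⨆ β : Set.Icc (-1 : ℝ) 1, g r (β * f r) := fun r b hbm =>
    le_ciSup (hb r) ⟨b, hbm⟩
  have hle' : ∀ r, ∀ b ∈ Set.Icc (-1 : ℝ) 1,
      |g r (b * f r)| ≤ ⨆ β : Set.Icc (-1 : ℝ) 1, |g r (β * f r)| := fun r b hbm =>
    le_ciSup (hb' r) ⟨b, hbm⟩
  have hgm : ∀ γ : SimpleFunc R ℝ, Measurable fun r => g r (γ r * f r) := fun γ =>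
    aux_meas g hmeas hcont _ (γ.measurable.mul hf)
  have hgi : ∀ γ : SimpleFunc R ℝ, (∀ r, γ r ∈ Set.Icc (-1 : ℝ) 1) →
      Integrable (fun r => g r (γ r * f r)) χ := fun γ hγ =>
    hint.mono' (hgm γ).aestronglyMeasurable (Filter.Eventually.of_forall fun r => hle' r _ (hγ r))
  let d : ℕ → Set.Icc (-1 : ℝ) 1 := TopologicalSpace.denseSeq _
  have hd : DenseRange d := TopologicalSpace.denseRange_denseSeq _
  choose γ hγ hmax using aux_seq g hmeas hcont f hf (fun n => (d n : ℝ)) (fun n => (d n).2)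
  have hlim : ∀ r, Filter.Tendsto (fun n => g r (γ n r * f r)) Filter.atTop
      (nhds (⨆ β : Set.Icc (-1 : ℝ) 1, g r (β * f r))) := by
    intro r
    refine tendsto_order.2 ⟨fun a ha => ?_, fun a ha =>
      Filter.Eventually.of_forall fun n => (hle r _ (hγ n r)).trans_lt ha⟩
    obtain ⟨β, hβ⟩ := exists_lt_of_lt_ciSup ha
    obtain ⟨k, hk⟩ := hd.exists_mem_open (isOpen_lt continuous_const (hc r)) ⟨β, hβ⟩
    filter_upwards [Filter.eventually_ge_atTop k] with n hn
    exact lt_of_lt_of_le hk (hmax n r k hn)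
  have hSm : Measurable fun r => ⨆ β : Set.Icc (-1 : ℝ) 1, g r (β * f r) :=
    measurable_of_tendsto_metrizable (fun n => hgm (γ n)) (tendsto_pi_nhds.2 hlim)
  have hSi : Integrable (fun r => ⨆ β : Set.Icc (-1 : ℝ) 1, g r (β * f r)) χ := by
    refine hint.mono' hSm.aestronglyMeasurable (Filter.Eventually.of_forall fun r => ?_)
    exact le_of_tendsto (hlim r).norm (Filter.Eventually.of_forall fun n => hle' r _ (hγ n r))
  have hI := tendsto_integral_of_dominated_convergence (μ := χ)
    (fun r => ⨆ β : Set.Icc (-1 : ℝ) 1, |g r (β * f r)|)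
    (fun n => (hgm (γ n)).aestronglyMeasurable) hint
    (fun n => Filter.Eventually.of_forall fun r => hle' r _ (hγ n r))
    (Filter.Eventually.of_forall hlim)
  symm
  refine IsLUB.csSup_eq ⟨?_, fun b hbu => ?_⟩ ⟨_, γ 0, hγ 0, rfl⟩
  · rintro y ⟨η, hη, rfl⟩
    exact integral_mono (hgi η hη) hSi fun r => hle r _ (hη r)
  · exact le_of_tendsto' hI fun n => hbu ⟨γ n, hγ n, rfl⟩
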